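/- The operators L̃¹_n := (1/2) L^{1/2}_{2n} + (1/32) δ_{n,0} · id_F on the neutral fermion Fock space F satisfy the Virasoro relations with central charge 1: for all m, n ∈ ℤ, L̃¹_m ∘ L̃¹_n − L̃¹_n ∘ L̃¹_m = (m−n) L̃¹_{m+n} + δ_{m,−n} · ((m³−m)/12) · id_F. (These are the modes of the 2-point-local Virasoro field L̃¹(z²) = (1/(8z²))(:∂_z φ^D(z) φ^D(z): + :∂_{−z} φ^D(−z) φ^D(−z):) + 1/(32z⁴) of central charge 1 on F^{⊗1/2}.) -/

import Mathlib

noncomputable section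

/-- The neutral fermion Fock space `F = F^{⊗1/2}`: the complex vector space with
basis `{e_S : S a finite subset of ℕ}`. -/
abbrev FockD : Type := Finset ℕ →₀ ℂ

/-- Basis vector `e_S`. -/
def eD (S : Finset ℕ) : FockD := Finsupp.single S 1

/-- Action of the fermion mode `a_m` on the basis vector `e_S`. -/
def aVec (m : ℤ) (S : Finset ℕ) : FockD :=
  if 0 ≤ m then
    if m.toNat ∈ S then 0
    else ((-1 : ℂ) ^ (S.filter (fun s => m.toNat < s)).card) • eD (insert m.toNat S)
  else
    if (-m - 1).toNat ∈ S then
      ((-1 : ℂ) ^ (S.filter (fun s => (-m - 1).toNat < s)).card) • eD (S.erase ((-m - 1).toNat))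
    else 0

/-- The fermion mode `a_m` as a linear operator on `F`. -/
def aOp (m : ℤ) : FockD →ₗ[ℂ] FockD :=
  Finsupp.lsum ℂ fun S => LinearMap.toSpanSingleton ℂ FockD (aVec m S)

/-- Fermionic normal ordered product `:a_i a_j:`. -/
def NO (i j : ℤ) : FockD →ₗ[ℂ] FockD :=
  if 0 ≤ i then (aOp i).comp (aOp j) else -((aOp j).comp (aOp i))

/-- Heisenberg operator `h_n = (1/2) ∑_{i∈ℤ} (−1)^{i+1} :a_i a_{−2n−1−i}:`
(on each vector only finitely many summands are nonzero). -/
def hD (n : ℤ) (x : FockD) : FockD :=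
  (1 / 2 : ℂ) • ∑ᶠ i : ℤ, ((-1 : ℂ) ^ (i + 1)) • NO i (-2 * n - 1 - i) x

/-- Virasoro operator `L^{1/2}_m = (1/2) ∑_{i∈ℤ} i · :a_i a_{−m−i−1}:`. -/
def LhalfD (m : ℤ) (x : FockD) : FockD :=
  (1 / 2 : ℂ) • ∑ᶠ i : ℤ, (i : ℂ) • NO i (-m - i - 1) x

/-- 2-point Virasoro operator `L¹_n = (1/2) ∑_{j∈ℤ} :h_j h_{n−j}:`, where the bosonic
normal ordered product is `:h_j h_k: = h_j h_k` if `j ≤ k` and `h_k h_j` otherwise. -/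
def L1D (n : ℤ) (x : FockD) : FockD :=
  (1 / 2 : ℂ) • ∑ᶠ j : ℤ, if j ≤ n - j then hD j (hD (n - j) x) else hD (n - j) (hD j x)

/-- Charge `c(S) = #{s ∈ S : s odd} − #{s ∈ S : s even}`. -/
def chg (S : Finset ℕ) : ℤ :=
  ((S.filter fun s => Odd s).card : ℤ) - ((S.filter fun s => Even s).card : ℤ)

/-- Charge-`n` component `F_{(n)}`: the span of the `e_S` with `c(S) = n`. -/
def FockComp (n : ℤ) : Submodule ℂ FockD :=
  Submodule.span ℂ {x : FockD | ∃ S : Finset ℕ, chg S = n ∧ x = eD S}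

/-- Index set of the vacuum-like vector `v_n`. -/
def vSet (n : ℤ) : Finset ℕ :=
  if 0 ≤ n then (Finset.range n.toNat).image fun i => 2 * i + 1
  else (Finset.range (-n).toNat).image fun i => 2 * i

/-- Vacuum-like vector `v_n` (`v_0 = e_∅`, `v_n = e_{{1,3,…,2n−1}}`,
`v_{−n} = e_{{0,2,…,2n−2}}` for `n > 0`). -/
def vD (n : ℤ) : FockD := eD (vSet n)

/-- The operators `L̃¹_n := (1/2) L^{1/2}_{2n} + (1/32) δ_{n,0} id_F`. -/
def Ltilde1 (n : ℤ) (x : FockD) : FockD :=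
  (1 / 2 : ℂ) • LhalfD (2 * n) x + (if n = 0 then (1 / 32 : ℂ) else 0) • x

/-!
The modes of a neutral fermion satisfy `[L_m, a_k] = (k + (1-m)/2) a_{k-m}`. Applying `[L_m, ·]` to
each term of `L_n` and restoring the normal order gives a normally ordered series and a scalar.
After reindexing, the series is `(1/2) ∑_i ((m-n) i + m(m+1)/2) :a_i a_{-m-n-i-1}:`, and the
constant part of the coefficient contributes nothing because `:a_i a_j:` is antisymmetric.
Reordering produces a scalar only when `m = -n`: half the sum of `i (i + (1-m)/2)` over `0 ≤ i < m`
(with the opposite sign over `m ≤ i < 0`), which is `(m³-m)/24`. Hence the `L_m` have central charge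
`1/2`.

If `L` satisfies the Virasoro relations with charge `c`, then
`n ↦ N⁻¹ L_{Nn} + δ_{n,0} c (N-N⁻¹)/24` does so with charge `N c`: the cubic term scales by `N³/N²`,
and the shift of the zero mode corrects the linear term. For `c = 1/2` and `N = 2` the shift is
`1/32`.
-/

open Filter Function

section Virasoro

variable {K A : Type*} [Field K] [Ring A] [Algebra K A]

/-- The Virasoro relations with central charge `c` for a family `L` in an associative algebra, the
central element acting as the scalar `c`. -/
def IsVirasoro (c : K) (L : ℤ → A) : Prop :=
  ∀ m n : ℤ, ⁅L m, L n⁆ = ((m - n : ℤ) : K) • L (m + n) +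
    (if m = -n then c * ((m ^ 3 - m : ℤ) : K) / 12 else 0) • (1 : A)

theorem IsVirasoro.apply_sub_apply {V : Type*} [AddCommGroup V] [Module K V] {c : K}
    {L : ℤ → Module.End K V} (hL : IsVirasoro c L) (m n : ℤ) (x : V) :
    L m (L n x) - L n (L m x) = ((m - n : ℤ) : K) • L (m + n) x +
      (if m = -n then c * ((m ^ 3 - m : ℤ) : K) / 12 else 0) • x :=
  LinearMap.congr_fun (hL m n) x

theorem lie_smul_add_smul_one (r s t : K) (x y : A) :
    ⁅r • x + s • (1 : A), r • y + t • (1 : A)⁆ = r ^ 2 • ⁅x, y⁆ := by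
  simp only [Ring.lie_def, mul_add, add_mul, smul_mul_smul_comm, mul_one, one_mul]
  module

theorem IsVirasoro.rescale [CharZero K] {c : K} {L : ℤ → A} (hL : IsVirasoro c L) {N : ℤ}
    (hN : N ≠ 0) :
    IsVirasoro (N * c) fun n =>
      (N : K)⁻¹ • L (N * n) + (if n = 0 then c / 24 * (N - (N : K)⁻¹) else 0) • (1 : A) := by
  have hNK : (N : K) ≠ 0 := Int.cast_ne_zero.mpr hN
  intro m n
  have h_delta : N * m = -(N * n) ↔ m = -n := by
    rw [← mul_neg, mul_right_inj' hN]
  rw [lie_smul_add_smul_one, hL (N * m) (N * n), ← mul_add]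
  simp only [h_delta]
  by_cases hmn : m = -n
  · subst hmn
    simp only [if_true, neg_add_cancel]
    push_cast
    match_scalars <;> field
  · rw [if_neg hmn, if_neg hmn, if_neg (by omega)]
    push_cast
    match_scalars <;> field

end Virasoro

section Anticommutation

variable {A : Type*} [Ring A]

theorem lie_mul_eq_anticommutator (x y z : A) :
    ⁅x * y, z⁆ = x * (y * z + z * y) - (x * z + z * x) * y := by
  rw [Ring.lie_def]
  noncomm_ring

theorem lie_mul_eq_lie_mul_add_mul_lie (x y z : A) : ⁅x, y * z⁆ = ⁅x, y⁆ * z + y * ⁅x, z⁆ := by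
  simp only [Ring.lie_def]
  noncomm_ring

/-- The canonical anticommutation relations `{a_i, a_j} = δ_{i+j,-1}` of the modes of a neutral
fermion. -/
def IsNeutralFermion (a : ℤ → A) : Prop :=
  ∀ i j : ℤ, a i * a j + a j * a i = if i + j = -1 then 1 else 0

/-- The normal ordered product `:a_i a_j:`, as in `NO` but for any family of modes. -/
def normalOrder (a : ℤ → A) (i j : ℤ) : A :=
  if 0 ≤ i then a i * a j else -(a j * a i)

variable {a : ℤ → A}

theorem IsNeutralFermion.mul_eq_normalOrder_add (ha : IsNeutralFermion a) (i j : ℤ) :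
    a i * a j = normalOrder a i j + if i < 0 ∧ i + j = -1 then 1 else 0 := by
  rcases lt_or_ge i 0 with hi | hi
  · simp only [normalOrder, hi.not_ge, hi, true_and, if_false, ← ha i j]
    abel
  · simp [normalOrder, hi, hi.not_gt]

theorem IsNeutralFermion.normalOrder_swap (ha : IsNeutralFermion a) (i j : ℤ) :
    normalOrder a j i = -normalOrder a i j := by
  have h_anti := ha i j
  unfold normalOrder
  split_ifs with hj hi hi
  · rw [if_neg (by omega)] at h_anti
    exact eq_neg_of_add_eq_zero_right h_anti
  · rw [neg_neg]
  · rfl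
  · rw [if_neg (by omega)] at h_anti
    rw [neg_neg, ← eq_neg_of_add_eq_zero_right h_anti]

theorem IsNeutralFermion.lie_normalOrder_mode (ha : IsNeutralFermion a) (i j k : ℤ) :
    ⁅normalOrder a i j, a k⁆ =
      (if j + k = -1 then a i else 0) - if i + k = -1 then a j else 0 := by
  calc ⁅normalOrder a i j, a k⁆
      = ⁅a i * a j, a k⁆ := by
        rw [ha.mul_eq_normalOrder_add i j, Ring.lie_def, Ring.lie_def]
        split_ifs <;> noncomm_ring
    _ = a i * (if j + k = -1 then 1 else 0) - (if i + k = -1 then 1 else 0) * a j := by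
        rw [lie_mul_eq_anticommutator, ha j k, ha i k]
    _ = _ := by
        simp only [mul_ite, ite_mul, mul_one, one_mul, mul_zero, zero_mul]

end Anticommutation

section Finsum

theorem hasFiniteSupport_ite_eq_single {ι M : Type*} [DecidableEq ι] [Zero M] (k : ι) (f : ι → M) :
    HasFiniteSupport fun i => if i = k then f i else 0 :=
  (Set.finite_singleton k).subset fun _ hi => by_contra fun h => hi (if_neg h)

theorem finsum_ite_eq_single {ι M : Type*} [DecidableEq ι] [AddCommMonoid M] (k : ι) (f : ι → M) :
    ∑ᶠ i, (if i = k then f i else 0) = f k := by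
  rw [finsum_eq_single _ k fun i hi => if_neg hi, if_pos rfl]

variable {M : Type*} [AddCommGroup M]

theorem hasFiniteSupport_ite_lt_sub_ite_lt (f : ℤ → M) (m n : ℤ) :
    HasFiniteSupport fun i => (if i < n then f i else 0) - if i < m then f i else 0 := by
  refine (Set.finite_Ico (min m n) (max m n)).subset fun i hi => ?_
  contrapose! hi
  have h_iff : i < n ↔ i < m := by
    rw [Set.mem_Ico] at hi
    omega
  simp [h_iff]

/-- Both truncated sums are infinite, but their difference is the oriented sum from `m` to `n`. -/
theorem finsum_ite_lt_sub_ite_lt (g : ℤ → M) (m n : ℤ) :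
    ∑ᶠ i, ((if i < n then g (i + 1) - g i else 0) - if i < m then g (i + 1) - g i else 0) =
      g n - g m := by
  have h_succ (n : ℤ) :
      ∑ᶠ i, ((if i < n + 1 then g (i + 1) - g i else 0) -
          if i < m then g (i + 1) - g i else 0) =
        ∑ᶠ i, ((if i < n then g (i + 1) - g i else 0) -
          if i < m then g (i + 1) - g i else 0) + (g (n + 1) - g n) := by
    rw [← finsum_ite_eq_single n fun i => g (i + 1) - g i, ← finsum_add_distrib
      (hasFiniteSupport_ite_lt_sub_ite_lt (fun i => g (i + 1) - g i) m n)
      (hasFiniteSupport_ite_eq_single n fun i => g (i + 1) - g i)]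
    refine finsum_congr fun i => ?_
    rcases lt_trichotomy i n with h | rfl | h
    · simp [h, h.ne, h.trans (lt_add_one n)]
    · simp [sub_eq_neg_add]
    · simp [h.ne', h.not_gt, h.not_ge]
  induction n using Int.inductionOn' (b := m) with
  | zero => simp
  | succ n _ ih => rw [h_succ, ih, sub_add_sub_cancel']
  | pred n _ ih =>
    have h := h_succ (n - 1)
    rw [sub_add_cancel, ih] at h
    rw [eq_sub_of_add_eq h.symm, sub_sub_sub_cancel_left]

theorem finsum_virasoro_cocycle {K : Type*} [Field K] [CharZero K] (m : ℤ) :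
    ∑ᶠ i : ℤ, ((if i < m then (i * (i + (1 - m) / 2) : K) else 0) -
      if i < 0 then (i * (i + (1 - m) / 2) : K) else 0) = (m ^ 3 - m) / 12 := by
  let g (i : ℤ) : K := i * (i - 1) * (4 * i + 1 - 3 * m) / 12
  have hg (i : ℤ) : (i * (i + (1 - m) / 2) : K) = g (i + 1) - g i := by
    simp only [g]
    push_cast
    field
  simp only [hg]
  rw [finsum_ite_lt_sub_ite_lt g 0 m]
  simp only [g]
  push_cast
  ring

end Finsum

section VirasoroModes

variable {K V : Type*} [Field K] [AddCommGroup V] [Module K V] {a : ℤ → Module.End K V}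

/-- A family of modes for which every vector is annihilated by all modes of sufficiently negative
index, so that the normal ordered sums below are finite on each vector. -/
def IsLocallyFinite (a : ℤ → Module.End K V) : Prop :=
  ∀ x, ∀ᶠ k in atBot, a k x = 0

theorem IsLocallyFinite.hasFiniteSupport_smul_normalOrder (hfin : IsLocallyFinite a) (f : ℤ → K)
    (s : ℤ) (x : V) : HasFiniteSupport fun i => f i • normalOrder a i (s - i - 1) x := by
  have h_tendsto : Tendsto (fun i : ℤ => s - i - 1) atTop atBot :=
    tendsto_atBot_add_const_right _ _ (tendsto_atBot_add_const_left _ s tendsto_neg_atTop_atBot)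
  refine HasFiniteSupport.smul_right f (eventually_cofinite.mp ?_)
  rw [Int.cofinite_eq, eventually_sup]
  constructor
  · filter_upwards [hfin x, eventually_lt_atBot 0] with i hi hi_neg
    simp [normalOrder, hi_neg.not_ge, hi]
  · filter_upwards [h_tendsto.eventually (hfin x), eventually_ge_atTop 0] with i hi hi_nonneg
    simp [normalOrder, hi_nonneg, hi]

theorem IsLocallyFinite.hasFiniteSupport_smul_normalOrder_sub (hfin : IsLocallyFinite a)
    (f : ℤ → K) (s k : ℤ) (x : V) :
    HasFiniteSupport fun i => f i • normalOrder a (i - k) (s - (i - k) - 1) x := by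
  have h_finite := hfin.hasFiniteSupport_smul_normalOrder (fun i => f (i + k)) s x
  simpa using h_finite.fun_comp_of_injective (sub_left_injective (b := k))

/-- The operator `L_m = (1/2) ∑_i i :a_i a_{-m-i-1}:` for any locally finite family of modes; for
the modes of the Fock space it is `L^{1/2}_m`. -/
def virasoroMode (hfin : IsLocallyFinite a) (m : ℤ) : Module.End K V where
  toFun x := (1 / 2 : K) • ∑ᶠ i : ℤ, (i : K) • normalOrder a i (-m - i - 1) x
  map_add' x y := by
    simp only [map_add, smul_add]
    rw [finsum_add_distrib (hfin.hasFiniteSupport_smul_normalOrder _ _ _)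
      (hfin.hasFiniteSupport_smul_normalOrder _ _ _), smul_add]
  map_smul' c x := by
    simp only [map_smul, smul_comm _ c, smul_finsum, RingHom.id_apply]

theorem virasoroMode_apply (hfin : IsLocallyFinite a) (m : ℤ) (x : V) :
    virasoroMode hfin m x =
      (1 / 2 : K) • ∑ᶠ i : ℤ, (i : K) • normalOrder a i (-m - i - 1) x :=
  rfl

theorem lie_virasoroMode_apply (hfin : IsLocallyFinite a) (T : Module.End K V) (n : ℤ) (x : V) :
    ⁅T, virasoroMode hfin n⁆ x =
      (1 / 2 : K) • ∑ᶠ i : ℤ, (i : K) • ⁅T, normalOrder a i (-n - i - 1)⁆ x := by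
  have h_finite := hfin.hasFiniteSupport_smul_normalOrder (fun i => (i : K)) (-n)
  simp only [Ring.lie_def, LinearMap.sub_apply, Module.End.mul_apply, smul_sub]
  rw [finsum_sub_distrib _ (h_finite (T x)), smul_sub, virasoroMode_apply, virasoroMode_apply,
    map_smul, map_finsum T (h_finite x)]
  · simp only [map_smul]
  · simpa only [map_smul] using (h_finite x).fun_comp (map_zero T)

theorem lie_virasoroMode_mode [CharZero K] (ha : IsNeutralFermion a) (hfin : IsLocallyFinite a)
    (m k : ℤ) : ⁅virasoroMode hfin m, a k⁆ = (k + (1 - m) / 2 : K) • a (k - m) := by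
  ext x
  have h_term (i : ℤ) : (i : K) • ⁅a k, normalOrder a i (-m - i - 1)⁆ x =
      (if i = k - m then (-i : K) • a i x else 0) +
        if i = -1 - k then (i : K) • a (-m - i - 1) x else 0 := by
    have h_left : -m - i - 1 + k = -1 ↔ i = k - m := by omega
    have h_right : i + k = -1 ↔ i = -1 - k := by omega
    rw [Ring.lie_def, ← neg_sub, ← Ring.lie_def, ha.lie_normalOrder_mode]
    simp only [h_left, h_right]
    split_ifs <;> simp [sub_eq_neg_add]
  rw [Ring.lie_def, ← neg_sub, ← Ring.lie_def, LinearMap.neg_apply, lie_virasoroMode_apply]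
  simp only [h_term]
  rw [finsum_add_distrib (hasFiniteSupport_ite_eq_single _ _) (hasFiniteSupport_ite_eq_single _ _),
    finsum_ite_eq_single, finsum_ite_eq_single, LinearMap.smul_apply,
    show -m - (-1 - k) - 1 = k - m by ring]
  push_cast
  module

theorem lie_virasoroMode_normalOrder [CharZero K] (ha : IsNeutralFermion a)
    (hfin : IsLocallyFinite a) (m i j : ℤ) :
    ⁅virasoroMode hfin m, normalOrder a i j⁆ =
      (i + (1 - m) / 2 : K) • normalOrder a (i - m) j +
        (j + (1 - m) / 2 : K) • normalOrder a i (j - m) +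
        (if i + j = m - 1 then (i + (1 - m) / 2 : K) *
          ((if i < m then 1 else 0) - if i < 0 then 1 else 0) else 0) • 1 := by
  calc ⁅virasoroMode hfin m, normalOrder a i j⁆
      = ⁅virasoroMode hfin m, a i * a j⁆ := by
        rw [ha.mul_eq_normalOrder_add i j, Ring.lie_def, Ring.lie_def]
        split_ifs <;> noncomm_ring
    _ = (i + (1 - m) / 2 : K) • (a (i - m) * a j) + (j + (1 - m) / 2 : K) • (a i * a (j - m)) := by
        rw [lie_mul_eq_lie_mul_add_mul_lie, lie_virasoroMode_mode ha, lie_virasoroMode_mode ha,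
          smul_mul_assoc, mul_smul_comm]
    _ = _ := by
        have h_left : (i - m < 0 ∧ i - m + j = -1) ↔ i < m ∧ i + j = m - 1 := by omega
        have h_right : (i < 0 ∧ i + (j - m) = -1) ↔ i < 0 ∧ i + j = m - 1 := by omega
        rw [ha.mul_eq_normalOrder_add, ha.mul_eq_normalOrder_add]
        simp only [h_left, h_right]
        by_cases h : i + j = m - 1
        · have hj : (j : K) = m - 1 - i := by
            rw [eq_sub_iff_add_eq']
            exact_mod_cast h
          simp only [h, hj, and_true, if_true]
          split_ifs <;> module
        · simp [h]

theorem finsum_normalOrder_eq_zero [CharZero K] (ha : IsNeutralFermion a) (s : ℤ) (x : V) :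
    ∑ᶠ i : ℤ, normalOrder a i (s - i - 1) x = 0 := by
  have : IsAddTorsionFree V := .of_isTorsionFree K V
  refine self_eq_neg.mp ?_
  rw [← finsum_neg_distrib, ← finsum_comp_equiv (Equiv.subLeft (s - 1))]
  refine finsum_congr fun i => ?_
  rw [← LinearMap.neg_apply, ← ha.normalOrder_swap, Equiv.subLeft_apply,
    show s - (s - 1 - i) - 1 = i by ring, show s - i - 1 = s - 1 - i by ring]

theorem finsum_normalOrder_lie_virasoroMode [CharZero K] (ha : IsNeutralFermion a)
    (hfin : IsLocallyFinite a) (m n : ℤ) (x : V) :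
    ∑ᶠ i : ℤ, ((i * (i + (1 - m) / 2) : K) • normalOrder a (i - m) (-(m + n) - (i - m) - 1) x +
        (i * ((-n - i - 1 : ℤ) + (1 - m) / 2) : K) • normalOrder a i (-(m + n) - i - 1) x) =
      ((m - n : ℤ) : K) • ∑ᶠ i : ℤ, (i : K) • normalOrder a i (-(m + n) - i - 1) x := by
  let N (i : ℤ) : V := normalOrder a i (-(m + n) - i - 1) x
  let f (i : ℤ) : K := i * (i + (1 - m) / 2)
  let g (i : ℤ) : K := i * ((-n - i - 1 : ℤ) + (1 - m) / 2)
  have h_finite (f : ℤ → K) : HasFiniteSupport fun i => f i • N i :=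
    hfin.hasFiniteSupport_smul_normalOrder f (-(m + n)) x
  have h_shift : ∑ᶠ i, f i • N (i - m) = ∑ᶠ i, f (i + m) • N i := by
    rw [← finsum_comp_equiv (Equiv.addRight m)]
    simp
  have h_coeff (i : ℤ) : f (i + m) • N i + g i • N i =
      ((m - n : ℤ) : K) • (i : K) • N i + (m * (m + 1) / 2 : K) • N i := by
    simp only [f, g]
    push_cast
    module
  calc ∑ᶠ i : ℤ, (f i • N (i - m) + g i • N i)
      = ∑ᶠ i : ℤ, (((m - n : ℤ) : K) • (i : K) • N i + (m * (m + 1) / 2 : K) • N i) := by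
        rw [finsum_add_distrib (hfin.hasFiniteSupport_smul_normalOrder_sub f _ m x) (h_finite g),
          h_shift, ← finsum_add_distrib (h_finite _) (h_finite g), finsum_congr h_coeff]
    _ = ((m - n : ℤ) : K) • ∑ᶠ i : ℤ, (i : K) • N i := by
        rw [finsum_add_distrib ((h_finite _).fun_comp (smul_zero _)) (h_finite _), ← smul_finsum,
          ← smul_finsum, finsum_normalOrder_eq_zero ha _ x, smul_zero, add_zero]

theorem isVirasoro_virasoroMode [CharZero K] (ha : IsNeutralFermion a)
    (hfin : IsLocallyFinite a) : IsVirasoro (1 / 2 : K) (virasoroMode hfin) := by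
  intro m n
  ext x
  let f (i : ℤ) : K := i * (i + (1 - m) / 2)
  let A (i : ℤ) : V := f i • normalOrder a (i - m) (-(m + n) - (i - m) - 1) x +
    (i * ((-n - i - 1 : ℤ) + (1 - m) / 2) : K) • normalOrder a i (-(m + n) - i - 1) x
  let c (i : ℤ) : K := (if i < m then f i else 0) - if i < 0 then f i else 0
  let y : V := if m = -n then x else 0
  have h_term (i : ℤ) :
      (i : K) • ⁅virasoroMode hfin m, normalOrder a i (-n - i - 1)⁆ x = A i + c i • y := by
    have h_iff : i + (-n - i - 1) = m - 1 ↔ m = -n := by omega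
    have h_left : -(m + n) - (i - m) - 1 = -n - i - 1 := by ring
    have h_right : -(m + n) - i - 1 = -n - i - 1 - m := by ring
    rw [lie_virasoroMode_normalOrder ha]
    simp only [h_iff, h_left, h_right, A, c, y, f, LinearMap.add_apply, LinearMap.smul_apply,
      Module.End.one_apply]
    split_ifs <;> module
  have hA : HasFiniteSupport A :=
    (hfin.hasFiniteSupport_smul_normalOrder_sub f _ m x).add
      (hfin.hasFiniteSupport_smul_normalOrder _ _ x)
  have hc : HasFiniteSupport c := hasFiniteSupport_ite_lt_sub_ite_lt f 0 m
  rw [lie_virasoroMode_apply, finsum_congr h_term,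
    finsum_add_distrib hA (hc.fun_comp (g := (· • y)) (zero_smul K y)), ← finsum_smul' hc,
    finsum_virasoro_cocycle, finsum_normalOrder_lie_virasoroMode ha hfin, LinearMap.add_apply,
    LinearMap.smul_apply, LinearMap.smul_apply, virasoroMode_apply, Module.End.one_apply]
  simp only [y]
  push_cast
  split_ifs <;> module

/-- The operators `N⁻¹ L_{Nn} + δ_{n,0} (N - N⁻¹) / 48`; for the modes of the Fock space and `N = 2`
these are the operators `L̃¹_n`. -/
def rescaledVirasoroMode (hfin : IsLocallyFinite a) (N n : ℤ) : Module.End K V :=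
  (N : K)⁻¹ • virasoroMode hfin (N * n) +
    (if n = 0 then ((N : K) - (N : K)⁻¹) / 48 else 0) • 1

theorem rescaledVirasoroMode_apply (hfin : IsLocallyFinite a) (N n : ℤ) (x : V) :
    rescaledVirasoroMode hfin N n x = (N : K)⁻¹ • virasoroMode hfin (N * n) x +
      (if n = 0 then ((N : K) - (N : K)⁻¹) / 48 else 0) • x :=
  rfl

end VirasoroModes

namespace FockD

/-- The sign picked up when the mode with index `t` moves past the factors of `e_S` of larger
index. -/
def koszulSign (t : ℕ) (S : Finset ℕ) : ℂ :=
  (-1) ^ (S.filter (t < ·)).card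

theorem koszulSign_mul_self (t : ℕ) (S : Finset ℕ) : koszulSign t S * koszulSign t S = 1 := by
  simp [koszulSign, ← mul_pow]

theorem koszulSign_insert {t u : ℕ} {S : Finset ℕ} (hu : u ∉ S) :
    koszulSign t (insert u S) = if t < u then -koszulSign t S else koszulSign t S := by
  rw [koszulSign, koszulSign, Finset.filter_insert]
  split_ifs
  · rw [Finset.card_insert_of_notMem (by simp [hu]), pow_succ, mul_neg_one]
  · rfl

theorem koszulSign_erase {t u : ℕ} {S : Finset ℕ} (hu : u ∈ S) :
    koszulSign t (S.erase u) = if t < u then -koszulSign t S else koszulSign t S := by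
  have h := koszulSign_insert (t := t) (Finset.notMem_erase u S)
  rw [Finset.insert_erase hu] at h
  rw [h]
  split_ifs <;> simp

theorem linearMap_ext {M : Type*} [AddCommMonoid M] [Module ℂ M] {f g : FockD →ₗ[ℂ] M}
    (h : ∀ S, f (eD S) = g (eD S)) : f = g :=
  Finsupp.lhom_ext' fun S => LinearMap.ext_ring (h S)

theorem aOp_eD (m : ℤ) (S : Finset ℕ) : aOp m (eD S) = aVec m S := by
  simp [aOp, eD]

theorem aOp_natCast_eD (t : ℕ) (S : Finset ℕ) :
    aOp t (eD S) = if t ∈ S then 0 else koszulSign t S • eD (insert t S) := by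
  simp [aOp_eD, aVec, koszulSign]

theorem aOp_negSucc_eD (t : ℕ) (S : Finset ℕ) :
    aOp (Int.negSucc t) (eD S) = if t ∈ S then koszulSign t S • eD (S.erase t) else 0 := by
  have h_index : (-Int.negSucc t - 1).toNat = t := by omega
  rw [aOp_eD, aVec, if_neg (by omega), h_index, koszulSign]

theorem aOp_natCast_anticomm_eD (t u : ℕ) (S : Finset ℕ) :
    aOp t (aOp u (eD S)) + aOp u (aOp t (eD S)) = 0 := by
  rcases eq_or_ne t u with rfl | htu
  · by_cases ht : t ∈ S <;> simp [aOp_natCast_eD, ht]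
  · rcases htu.lt_or_gt with h | h <;> by_cases ht : t ∈ S <;> by_cases hu : u ∈ S <;>
      simp [aOp_natCast_eD, ht, hu, koszulSign_insert, htu, htu.symm, h, h.not_gt, smul_smul,
        Finset.insert_comm t u, mul_comm]

theorem aOp_negSucc_anticomm_eD (t u : ℕ) (S : Finset ℕ) :
    aOp (Int.negSucc t) (aOp (Int.negSucc u) (eD S)) +
      aOp (Int.negSucc u) (aOp (Int.negSucc t) (eD S)) = 0 := by
  rcases eq_or_ne t u with rfl | htu
  · by_cases ht : t ∈ S <;> simp [aOp_negSucc_eD, ht]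
  · rcases htu.lt_or_gt with h | h <;> by_cases ht : t ∈ S <;> by_cases hu : u ∈ S <;>
      simp [aOp_negSucc_eD, ht, hu, koszulSign_erase, htu, htu.symm, h, h.not_gt, smul_smul,
        Finset.erase_right_comm (a := t) (b := u), mul_comm]

theorem aOp_natCast_negSucc_anticomm_eD (t u : ℕ) (S : Finset ℕ) :
    aOp t (aOp (Int.negSucc u) (eD S)) + aOp (Int.negSucc u) (aOp t (eD S)) =
      if t = u then eD S else 0 := by
  rcases eq_or_ne t u with rfl | htu
  · by_cases ht : t ∈ S <;>
      simp [aOp_natCast_eD, aOp_negSucc_eD, ht, koszulSign_erase, koszulSign_insert, smul_smul,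
        koszulSign_mul_self]
  · rcases htu.lt_or_gt with h | h <;> by_cases ht : t ∈ S <;> by_cases hu : u ∈ S <;>
      simp [aOp_natCast_eD, aOp_negSucc_eD, ht, hu, koszulSign_erase, koszulSign_insert, htu,
        htu.symm, h, h.not_gt, smul_smul, Finset.erase_insert_of_ne htu, mul_comm]

theorem isNeutralFermion_aOp : IsNeutralFermion (A := Module.End ℂ FockD) aOp := by
  intro i j
  refine linearMap_ext fun S => ?_
  have h_delta : (if i + j = -1 then 1 else 0 : Module.End ℂ FockD) (eD S) =
      if i + j = -1 then eD S else 0 := by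
    split_ifs <;> rfl
  rw [h_delta]
  change aOp i (aOp j (eD S)) + aOp j (aOp i (eD S)) = _
  rcases i with t | t <;> rcases j with u | u
  · have h_ne : Int.ofNat t + Int.ofNat u ≠ -1 := by
      simp only [Int.ofNat_eq_natCast]
      omega
    exact (aOp_natCast_anticomm_eD t u S).trans (if_neg h_ne).symm
  · refine (aOp_natCast_negSucc_anticomm_eD t u S).trans (if_congr ?_ rfl rfl)
    rw [Int.ofNat_eq_natCast]
    omega
  · rw [add_comm]
    refine (aOp_natCast_negSucc_anticomm_eD u t S).trans (if_congr ?_ rfl rfl)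
    rw [Int.ofNat_eq_natCast]
    omega
  · exact (aOp_negSucc_anticomm_eD t u S).trans (if_neg (by omega)).symm

theorem isLocallyFinite_aOp : IsLocallyFinite (K := ℂ) (V := FockD) aOp := by
  intro x
  induction x using Finsupp.induction_linear with
  | zero => simp
  | add x y hx hy =>
    filter_upwards [hx, hy] with k hkx hky
    rw [map_add, hkx, hky, add_zero]
  | single S c =>
    filter_upwards [eventually_lt_atBot (-((S.sup id : ℕ) : ℤ) - 1)] with k hk
    obtain ⟨t, rfl⟩ := Int.eq_negSucc_of_lt_zero (show k < 0 by omega)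
    have ht : t ∉ S := fun ht => by
      have : t ≤ S.sup id := Finset.le_sup (f := id) ht
      omega
    rw [← mul_one c, ← smul_eq_mul, ← Finsupp.smul_single, ← eD, map_smul, aOp_negSucc_eD,
      if_neg ht, smul_zero]

theorem Ltilde1_eq_rescaledVirasoroMode (n : ℤ) (x : FockD) :
    Ltilde1 n x = rescaledVirasoroMode isLocallyFinite_aOp 2 n x := by
  have h_half : LhalfD (2 * n) x = virasoroMode isLocallyFinite_aOp (2 * n) x := rfl
  rw [Ltilde1, h_half, rescaledVirasoroMode_apply]
  norm_num

end FockD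

theorem virasoro_tilde_charge_one_general {K V : Type*} [Field K] [CharZero K] [AddCommGroup V]
    [Module K V] {a : ℤ → Module.End K V} (ha : IsNeutralFermion a) (hfin : IsLocallyFinite a)
    {N : ℤ} (hN : N ≠ 0) : IsVirasoro (N / 2 : K) (rescaledVirasoroMode hfin N) := by
  convert (isVirasoro_virasoroMode ha hfin).rescale hN using 1
  · ring
  · ext n x
    simp only [rescaledVirasoroMode]
    congr 4
    ring

/-- The operators `L̃¹_n = (1/2) L^{1/2}_{2n} + (1/32) δ_{n,0} id_F` on the neutral fermion
Fock space satisfy the Virasoro relations with central charge `1`. -/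
theorem virasoro_tilde_charge_one (m n : ℤ) (x : FockD) :
    Ltilde1 m (Ltilde1 n x) - Ltilde1 n (Ltilde1 m x)
      = ((m - n : ℤ) : ℂ) • Ltilde1 (m + n) x
        + (if m = -n then ((m ^ 3 - m : ℤ) : ℂ) / 12 else 0) • x := by
  simpa [FockD.Ltilde1_eq_rescaledVirasoroMode] using
    (virasoro_tilde_charge_one_general FockD.isNeutralFermion_aOp FockD.isLocallyFinite_aOp
      two_ne_zero).apply_sub_apply m n x
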